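/- Let k ∈ {0, 1, 2}, let π be a k-convex permutation of [n] with n ≥ 4, and let τ be a k-convex permutation of [m] with m ≥ 4. Suppose π(1) = τ(1), π(2) = τ(2), and π(n) = τ(m) (the next-to-last entries π(n−1) and τ(m−1) may differ), and suppose both R(π) and R(τ) are k-convex. Then d_k(π, i) = d_k(τ, i) for every integer i ≥ 0. -/

import Mathlib

/-- A permutation `π` of `[n]` (modeled 0-indexed as `π : Equiv.Perm (Fin n)`;
the entry at position `i` has 1-indexed value `(π i : ℕ) + 1`) is `k`-convex if
`π(i-1) + π(i+1) - 2π(i) ≤ k` for all interior positions. -/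
def IsKConvex (k : ℕ) {n p : ℕ} (f : Fin n → Fin p) : Prop :=
  ∀ i j l : Fin n, (i : ℕ) + 1 = (j : ℕ) → (j : ℕ) + 1 = (l : ℕ) →
    ((f i : ℕ) : ℤ) + ((f l : ℕ) : ℤ) - 2 * ((f j : ℕ) : ℤ) ≤ (k : ℤ)

/-- The left descendant `L(π)`. -/
def Lf {n : ℕ} (f : Fin n → Fin n) : Fin (n + 1) → Fin (n + 1) :=
  Fin.cons 0 (fun i => (f i).succ)

/-- The right descendant `R(π)`. -/
def Rf {n : ℕ} (f : Fin n → Fin n) : Fin (n + 1) → Fin (n + 1) :=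
  Fin.snoc (fun i => (f i).succ) 0

/-- One step of descent: letter `false` is `L`, letter `true` is `R`. -/
def stepP {n : ℕ} (b : Bool) (f : Fin n → Fin n) : Fin (n + 1) → Fin (n + 1) :=
  if b then Rf f else Lf f

/-- `applyWord f i W` is `W(f) = W_i(W_{i-1}(⋯(W_1(f))⋯))` for the word
`W = W_1 W_2 … W_i` over the alphabet `{L, R}` (a word is `W : Fin i → Bool`). -/
def applyWord {n : ℕ} (f : Fin n → Fin n) :
    (i : ℕ) → (Fin i → Bool) → (Fin (n + i) → Fin (n + i))
  | 0, _ => f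
  | i + 1, W => stepP (W (Fin.last i)) (applyWord f i fun j => W j.castSucc)

/-- `d_k(π, i)`: the number of words `W` of length `i` over `{L, R}` such that
`W(π)` is `k`-convex. -/
noncomputable def dk (k : ℕ) {n : ℕ} (f : Fin n → Fin n) (i : ℕ) : ℕ :=
  Nat.card {W : Fin i → Bool // IsKConvex k (applyWord f i W)}

/-
Whether a descendant of `π` is `k`-convex is decided at the two ends of `π`: prefixing the new
minimum to `ab…` costs the single inequality `b ≤ 2a + k + 1` (entries counted from `0`), and
appending it to `…cd` costs `c ≤ 2d + k + 1`. Measure the failure of such an inequality by the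
truncated difference `b ∸ (2a + k + 1)`. When the minimum is added at the other end, `a` and `b`
both grow by `1` and this defect drops by `1`; when it is added at the same end, the new defect is
`a ∸ k`. So the end entries and the defects evolve like the states of a deterministic automaton,
and `c` matters only through its defect, which is `0` as soon as `R(π)` is `k`-convex.
-/

section Steps

variable {n : ℕ} (f : Fin n → Fin n)

lemma Lf_zero : Lf f 0 = 0 := rfl

lemma Lf_succ (i : Fin n) : Lf f i.succ = (f i).succ := rfl

lemma Rf_castSucc (i : Fin n) : Rf f i.castSucc = (f i).succ :=
  Fin.snoc_castSucc ..

lemma Lf_comp_rev : Lf f ∘ Fin.rev = Rf (f ∘ Fin.rev) :=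
  Fin.cons_comp_rev ..

lemma Rf_comp_rev : Rf f ∘ Fin.rev = Lf (f ∘ Fin.rev) :=
  Fin.snoc_comp_rev ..

end Steps

lemma IsKConvex.comp_rev {k n p : ℕ} {f : Fin n → Fin p} (hf : IsKConvex k f) :
    IsKConvex k (f ∘ Fin.rev) := by
  intro i j l hij hjl
  have h := hf l.rev j.rev i.rev (by simp only [Fin.val_rev]; omega)
    (by simp only [Fin.val_rev]; omega)
  simp only [Function.comp_apply]
  omega

lemma isKConvex_comp_rev {k n p : ℕ} {f : Fin n → Fin p} :
    IsKConvex k (f ∘ Fin.rev) ↔ IsKConvex k f := by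
  refine ⟨fun h => ?_, IsKConvex.comp_rev⟩
  simpa only [Function.comp_assoc, Fin.rev_involutive.comp_self, Function.comp_id] using h.comp_rev

/-- What the descents of a map see of one of its ends: the outermost entry `a`, and the truncated
difference `b ∸ (2a + k + 1)`, where `b` is the entry next to it. The defect vanishes exactly when
the new minimum may be added at this end. Entries are 0-indexed. -/
@[ext]
structure EndState where
  entry : ℕ
  defect : ℕ

namespace EndState

/-- The state of an end after the new minimum has been added there. -/
def extend (k : ℕ) (s : EndState) : EndState where
  entry := 0
  defect := s.entry - k

/-- The state of an end after the new minimum has been added at the other end. -/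
def shift (s : EndState) : EndState where
  entry := s.entry + 1
  defect := s.defect - 1

end EndState

section Ends

variable (k : ℕ) {n : ℕ} (f : Fin n → Fin n) (hn : 2 ≤ n)

/-- The state of the left end of a map with at least two entries. -/
def leftEnd : EndState where
  entry := f ⟨0, by omega⟩
  defect := f ⟨1, hn⟩ - (2 * f ⟨0, by omega⟩ + k + 1)

/-- The state of the right end of a map with at least two entries. -/
def rightEnd : EndState :=
  leftEnd k (f ∘ Fin.rev) hn

lemma leftEnd_Lf : leftEnd k (Lf f) (by omega) = (leftEnd k f hn).extend k := by
  have h0 : Lf f ⟨0, by omega⟩ = 0 := Lf_zero f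
  have h1 : Lf f ⟨1, by omega⟩ = (f ⟨0, by omega⟩).succ := Lf_succ f ⟨0, by omega⟩
  ext
  · simp only [leftEnd, EndState.extend, h0, Fin.val_zero]
  · simp only [leftEnd, EndState.extend, h0, h1, Fin.val_zero, Fin.val_succ]
    omega

lemma leftEnd_Rf : leftEnd k (Rf f) (by omega) = (leftEnd k f hn).shift := by
  have h0 : Rf f ⟨0, by omega⟩ = (f ⟨0, by omega⟩).succ := Rf_castSucc f ⟨0, by omega⟩
  have h1 : Rf f ⟨1, by omega⟩ = (f ⟨1, hn⟩).succ := Rf_castSucc f ⟨1, hn⟩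
  ext
  · simp only [leftEnd, EndState.shift, h0, Fin.val_succ]
  · simp only [leftEnd, EndState.shift, h0, h1, Fin.val_succ]
    omega

lemma rightEnd_Lf : rightEnd k (Lf f) (by omega) = (rightEnd k f hn).shift := by
  simp only [rightEnd, Lf_comp_rev, leftEnd_Rf k _ hn]

lemma rightEnd_Rf : rightEnd k (Rf f) (by omega) = (rightEnd k f hn).extend k := by
  simp only [rightEnd, Rf_comp_rev, leftEnd_Lf k _ hn]

lemma rightEnd_entry : (rightEnd k f hn).entry = f ⟨n - 1, by omega⟩ := rfl

lemma isKConvex_Lf_iff :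
    IsKConvex k (Lf f) ↔ IsKConvex k f ∧ (leftEnd k f hn).defect = 0 := by
  constructor
  · refine fun h => ⟨fun i j l hij hjl => ?_, ?_⟩
    · have := h i.succ j.succ l.succ (by simpa using hij) (by simpa using hjl)
      simp only [Lf_succ, Fin.val_succ] at this
      omega
    · have := h 0 (Fin.succ ⟨0, by omega⟩) (Fin.succ ⟨1, hn⟩) rfl rfl
      simp only [Lf_zero, Lf_succ, Fin.val_zero, Fin.val_succ] at this
      simp only [leftEnd]
      omega
  · rintro ⟨hf, hdefect⟩ i j l hij hjl
    obtain ⟨j, rfl⟩ := Fin.exists_succ_eq_of_ne_zero (x := j) (by rintro rfl; simp at hij)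
    obtain ⟨l, rfl⟩ := Fin.exists_succ_eq_of_ne_zero (x := l) (by rintro rfl; simp at hjl)
    cases i using Fin.cases with
    | zero =>
      have hj : j = ⟨0, by omega⟩ := Fin.ext (by simpa using hij.symm)
      have hl : l = ⟨1, hn⟩ := Fin.ext (by simpa [hj] using hjl.symm)
      simp only [leftEnd] at hdefect
      simp only [hj, hl, Lf_zero, Lf_succ, Fin.val_zero, Fin.val_succ]
      omega
    | succ i =>
      have := hf i j l (by simpa using hij) (by simpa using hjl)
      simp only [Lf_succ, Fin.val_succ]
      omega

lemma isKConvex_Rf_iff :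
    IsKConvex k (Rf f) ↔ IsKConvex k f ∧ (rightEnd k f hn).defect = 0 := by
  rw [← isKConvex_comp_rev, Rf_comp_rev, isKConvex_Lf_iff k _ hn, isKConvex_comp_rev, rightEnd]

end Ends

/-- The state of the automaton that reads a word `W` and decides whether `W(π)` is `k`-convex:
whether the current map is `k`-convex, and the states of its two ends. -/
@[ext]
structure DescentState where
  convex : Prop
  left : EndState
  right : EndState

/-- The transition of the automaton; as in `stepP`, the letter `false` is `L` and `true` is `R`. -/
def DescentState.step (k : ℕ) (s : DescentState) : Bool → DescentState
  | false => ⟨s.convex ∧ s.left.defect = 0, s.left.extend k, s.right.shift⟩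
  | true => ⟨s.convex ∧ s.right.defect = 0, s.left.shift, s.right.extend k⟩

/-- The state of the automaton at a given map. -/
def descentState (k : ℕ) {n : ℕ} (f : Fin n → Fin n) (hn : 2 ≤ n) : DescentState where
  convex := IsKConvex k f
  left := leftEnd k f hn
  right := rightEnd k f hn

lemma descentState_stepP (k : ℕ) {n : ℕ} (f : Fin n → Fin n) (hn : 2 ≤ n) (b : Bool) :
    descentState k (stepP b f) (by omega) = (descentState k f hn).step k b := by
  cases b
  · exact DescentState.ext (propext (isKConvex_Lf_iff k f hn)) (leftEnd_Lf k f hn)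
      (rightEnd_Lf k f hn)
  · exact DescentState.ext (propext (isKConvex_Rf_iff k f hn)) (leftEnd_Rf k f hn)
      (rightEnd_Rf k f hn)

section Comparison

variable {k n m : ℕ} {f : Fin n → Fin n} {g : Fin m → Fin m} {hn : 2 ≤ n} {hm : 2 ≤ m}

lemma descentState_applyWord_congr (h : descentState k f hn = descentState k g hm)
    (i : ℕ) (W : Fin i → Bool) :
    descentState k (applyWord f i W) (by omega) = descentState k (applyWord g i W) (by omega) := by
  induction i with
  | zero => exact h
  | succ i ih =>
    have hni : 2 ≤ n + i := by omega
    have hmi : 2 ≤ m + i := by omega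
    let V : Fin i → Bool := fun j => W j.castSucc
    calc descentState k (applyWord f (i + 1) W) _
        = (descentState k (applyWord f i V) hni).step k (W (Fin.last i)) :=
          descentState_stepP k _ hni _
      _ = (descentState k (applyWord g i V) hmi).step k (W (Fin.last i)) := by rw [ih]
      _ = descentState k (applyWord g (i + 1) W) _ := (descentState_stepP k _ hmi _).symm

lemma dk_congr (h : descentState k f hn = descentState k g hm) (i : ℕ) : dk k f i = dk k g i :=
  Nat.card_congr <| Equiv.subtypeEquivRight fun W =>
    iff_of_eq <| congrArg DescentState.convex (descentState_applyWord_congr h i W)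

end Comparison

theorem identically_descending_thm_general (k : ℕ) {n m : ℕ} (hn : 2 ≤ n) (hm : 2 ≤ m)
    (f : Fin n → Fin n) (g : Fin m → Fin m)
    (hfirst : (f ⟨0, by omega⟩ : ℕ) = g ⟨0, by omega⟩)
    (hsecond : (f ⟨1, by omega⟩ : ℕ) = g ⟨1, by omega⟩)
    (hlast : (f ⟨n - 1, by omega⟩ : ℕ) = g ⟨m - 1, by omega⟩)
    (hRf : IsKConvex k (Rf f)) (hRg : IsKConvex k (Rf g)) (i : ℕ) :
    dk k f i = dk k g i := by
  obtain ⟨hf, hf_defect⟩ := (isKConvex_Rf_iff k f hn).1 hRf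
  obtain ⟨hg, hg_defect⟩ := (isKConvex_Rf_iff k g hm).1 hRg
  have hleft : leftEnd k f hn = leftEnd k g hm := by
    simp only [leftEnd, hfirst, hsecond]
  have hright : rightEnd k f hn = rightEnd k g hm :=
    EndState.ext (by simpa only [rightEnd_entry] using hlast) (hf_defect.trans hg_defect.symm)
  have hstate : descentState k f hn = descentState k g hm :=
    DescentState.ext (propext (iff_of_true hf hg)) hleft hright
  exact dk_congr hstate i

/-- Theorem `thm:id`: for `k ∈ {0,1,2}`, two `k`-convex permutations
`π = ab…cd` and `τ = ab…c'd` (`n, m ≥ 4`) agreeing on their first two entries and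
their last entries, such that both `R(π)` and `R(τ)` are `k`-convex, are
identically-descending: `d_k(π, i) = d_k(τ, i)` for all `i ≥ 0`. -/
theorem identically_descending_thm (k : ℕ) (hk : k ≤ 2)
    (n m : ℕ) (hn : 4 ≤ n) (hm : 4 ≤ m)
    (π : Equiv.Perm (Fin n)) (τ : Equiv.Perm (Fin m))
    (hπ : IsKConvex k ⇑π) (hτ : IsKConvex k ⇑τ)
    (h1 : (π ⟨0, by omega⟩ : ℕ) = (τ ⟨0, by omega⟩ : ℕ))
    (h2 : (π ⟨1, by omega⟩ : ℕ) = (τ ⟨1, by omega⟩ : ℕ))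
    (hlast : (π ⟨n - 1, by omega⟩ : ℕ) = (τ ⟨m - 1, by omega⟩ : ℕ))
    (hRπ : IsKConvex k (Rf ⇑π)) (hRτ : IsKConvex k (Rf ⇑τ)) :
    ∀ i : ℕ, dk k ⇑π i = dk k ⇑τ i := by
  exact identically_descending_thm_general k (by omega) (by omega) π τ h1 h2 hlast hRπ hRτ
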